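/- Let X ⊂ P^r be an integral non-degenerate projective variety over an algebraically closed field of characteristic zero. If every finite subset of X of cardinality at most t is linearly independent for t = r+1 (i.e., ρ'(X) = r+1, equivalently ρ'(X) > r), then X is a rational normal curve. -/

import Mathlib

open MvPolynomial

noncomputable section

namespace Dep

variable (K : Type) [Field K]

/-- `PS K n` is the projective space of lines in `K^n`, i.e. `ℙ^{n-1}`. -/
abbrev PS (n : ℕ) := Projectivization K (Fin n → K)

/-- The projective zero locus of a (homogeneous) polynomial. -/
def zeros {n : ℕ} (f : MvPolynomial (Fin n) K) : Set (PS K n) :=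
  {p | ∀ v : Fin n → K, ∀ hv : v ≠ 0, Projectivization.mk K v hv = p → eval v f = 0}

/-- Zariski-closed subsets of projective space: common zero loci of families of
homogeneous polynomials. -/
def IsZClosed {n : ℕ} (X : Set (PS K n)) : Prop :=
  ∃ F : Set (MvPolynomial (Fin n) K), (∀ f ∈ F, ∃ d, f.IsHomogeneous d) ∧
    X = ⋂ f ∈ F, zeros K f

/-- Irreducible closed subsets. -/
def IsIrredClosed {n : ℕ} (X : Set (PS K n)) : Prop :=
  X.Nonempty ∧ IsZClosed K X ∧
    ∀ C₁ C₂ : Set (PS K n), IsZClosed K C₁ → IsZClosed K C₂ → X ⊆ C₁ ∪ C₂ →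
      X ⊆ C₁ ∨ X ⊆ C₂

/-- Zariski closure. -/
def zclosure {n : ℕ} (S : Set (PS K n)) : Set (PS K n) :=
  ⋂₀ {C | IsZClosed K C ∧ S ⊆ C}

/-- Dimension of a subset of projective space: the supremum of lengths of strict chains
of irreducible closed subsets contained in it. -/
def zdim {n : ℕ} (X : Set (PS K n)) : ℕ :=
  sSup {m | ∃ C : Fin (m + 1) → Set (PS K n),
    (∀ i, IsIrredClosed K (C i) ∧ C i ⊆ X) ∧
    ∀ i j : Fin (m + 1), i < j → C i ⊂ C j}

/-- The linear subspace of `K^n` spanned by (representatives of) a set of projective points. -/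
def projSpan {n : ℕ} (S : Set (PS K n)) : Submodule K (Fin n → K) :=
  Submodule.span K (Projectivization.rep '' S)

/-- The projective linear span of a set of projective points, as a set of points. -/
def spanSet {n : ℕ} (S : Set (PS K n)) : Set (PS K n) :=
  {p | p.rep ∈ projSpan K S}

/-- Non-degenerate: not contained in any hyperplane, i.e. the points span everything. -/
def Nondeg {n : ℕ} (X : Set (PS K n)) : Prop := projSpan K X = ⊤

/-- An integral non-degenerate projective variety in `ℙ^{n-1}`. -/
def IsVariety {n : ℕ} (X : Set (PS K n)) : Prop :=
  IsIrredClosed K X ∧ Nondeg K X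

/-- A finite set of projective points is linearly independent if its span has dimension
(as a vector subspace) equal to its cardinality. -/
def LinIndepSet {n : ℕ} (S : Finset (PS K n)) : Prop :=
  Module.finrank K (projSpan K (S : Set (PS K n))) = S.card

/-- `ρ'(X)`: the maximal `t > 0` such that every subset of `X` with at most `t` points is
linearly independent. -/
def rho' {n : ℕ} (X : Set (PS K n)) : ℕ :=
  sSup {t | 0 < t ∧ ∀ S : Finset (PS K n), ↑S ⊆ X → S.card ≤ t → LinIndepSet K S}

/- ### Zero-dimensional subschemes, via homogeneous ideals -/

/-- A homogeneous ideal. -/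
def IsHomogIdeal {n : ℕ} (I : Ideal (MvPolynomial (Fin n) K)) : Prop :=
  ∀ f ∈ I, ∀ d : ℕ, homogeneousComponent d f ∈ I

/-- The homogeneous vanishing ideal of a set of projective points. -/
def hVanish {n : ℕ} (S : Set (PS K n)) : Ideal (MvPolynomial (Fin n) K) :=
  Ideal.span {f | (∃ d, f.IsHomogeneous d) ∧ S ⊆ zeros K f}

/-- The Hilbert function of (the subscheme defined by) a homogeneous ideal: the dimension of
the degree-`m` graded piece of the quotient ring. -/
def hilb {n : ℕ} (I : Ideal (MvPolynomial (Fin n) K)) (m : ℕ) : ℕ :=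
  Module.finrank K (Submodule.map (Ideal.Quotient.mkₐ K I).toLinearMap
    (homogeneousSubmodule (Fin n) K m))

/-- The subscheme defined by `I` is zero-dimensional of degree `d`: the Hilbert function is
eventually constant, equal to `d`. -/
def SchemeDeg {n : ℕ} (I : Ideal (MvPolynomial (Fin n) K)) (d : ℕ) : Prop :=
  ∃ N, ∀ m ≥ N, hilb K I m = d

/-- The subscheme defined by `I` lies in `X`. -/
def SubschemeOf {n : ℕ} (X : Set (PS K n)) (I : Ideal (MvPolynomial (Fin n) K)) : Prop :=
  hVanish K X ≤ I

/-- The degree-one part of a homogeneous ideal, i.e. the linear forms vanishing on the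
corresponding subscheme. -/
def degOnePart {n : ℕ} (I : Ideal (MvPolynomial (Fin n) K)) :
    Submodule K (MvPolynomial (Fin n) K) :=
  homogeneousSubmodule (Fin n) K 1 ⊓ I.restrictScalars K

/-- A zero-dimensional subscheme of degree `d` of `ℙ^{n-1}` is linearly independent iff its
projective span has dimension `d - 1`, i.e. exactly `n - d` independent linear forms vanish
on it. -/
def SchemeLinIndep {n : ℕ} (I : Ideal (MvPolynomial (Fin n) K)) (d : ℕ) : Prop :=
  Module.finrank K (degOnePart K I) = n - d

/-- The projective linear span of the subscheme defined by `I`: the common zero locus of the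
linear forms in `I`. -/
def schemeSpan {n : ℕ} (I : Ideal (MvPolynomial (Fin n) K)) : Set (PS K n) :=
  {p | ∀ f ∈ I, f.IsHomogeneous 1 → p ∈ zeros K f}

/-- The set-theoretic zero locus of an ideal. -/
def idealZeros {n : ℕ} (I : Ideal (MvPolynomial (Fin n) K)) : Set (PS K n) :=
  {p | ∀ f ∈ I, ∀ m : ℕ, p ∈ zeros K (homogeneousComponent m f)}

/-- The subscheme defined by `I` is reduced: `I` is the full vanishing ideal of its zero set. -/
def IsReducedScheme {n : ℕ} (I : Ideal (MvPolynomial (Fin n) K)) : Prop :=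
  I = hVanish K (idealZeros K I)

/- ### Smoothability: flat limits of reduced finite subsets -/

/-- Specialisation of a one-parameter family of ideals at `c : K`. -/
def fiberAt {n : ℕ} (J : Ideal (MvPolynomial (Fin n) (Polynomial K))) (c : K) :
    Ideal (MvPolynomial (Fin n) K) :=
  Ideal.map (MvPolynomial.map (Polynomial.evalRingHom c)) J

/-- `Z` (given by `I`, of degree `d`) is smoothable in `X`: either `Z` is already a reduced set
of `d` points of `X`, or `Z` is the flat limit at `0` of a one-parameter family whose general
member is a reduced set of `d` points of `X`.  Flatness over `K[t]` is encoded as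
torsion-freeness of the quotient. -/
def SmoothableIn {n : ℕ} (X : Set (PS K n)) (I : Ideal (MvPolynomial (Fin n) K)) (d : ℕ) :
    Prop :=
  (∃ S : Finset (PS K n), ↑S ⊆ X ∧ S.card = d ∧ I = hVanish K (S : Set (PS K n))) ∨
  ∃ J : Ideal (MvPolynomial (Fin n) (Polynomial K)),
    (∀ f ∈ J, ∀ m : ℕ, homogeneousComponent m f ∈ J) ∧
    (∀ p : Polynomial K, p ≠ 0 → ∀ f, MvPolynomial.C p * f ∈ J → f ∈ J) ∧
    fiberAt K J 0 = I ∧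
    ∃ E : Set K, E.Finite ∧ ∀ c : K, c ∉ E →
      ∃ S : Finset (PS K n), ↑S ⊆ X ∧ S.card = d ∧
        fiberAt K J c = hVanish K (S : Set (PS K n))

/-- `ρ''(X)`: the maximal `t > 0` such that every zero-dimensional subscheme of `X` of degree
at most `t` which is smoothable in `X` is linearly independent. -/
def rho'' {n : ℕ} (X : Set (PS K n)) : ℕ :=
  sSup {t | 0 < t ∧ ∀ (I : Ideal (MvPolynomial (Fin n) K)) (d : ℕ),
    IsHomogIdeal K I → SubschemeOf K X I → SchemeDeg K I d → SmoothableIn K X I d →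
    d ≤ t → SchemeLinIndep K I d}

/-- `ρ(X)`: the maximal `t > 0` such that every zero-dimensional subscheme of `X` of degree
at most `t` is linearly independent. -/
def rho {n : ℕ} (X : Set (PS K n)) : ℕ :=
  sSup {t | 0 < t ∧ ∀ (I : Ideal (MvPolynomial (Fin n) K)) (d : ℕ),
    IsHomogIdeal K I → SubschemeOf K X I → SchemeDeg K I d →
    d ≤ t → SchemeLinIndep K I d}

/- ### Ranks and secant varieties -/

/-- The `X`-rank of a point `q`. -/
def Xrank {n : ℕ} (X : Set (PS K n)) (q : PS K n) : ℕ :=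
  sInf {t | 0 < t ∧ ∃ S : Finset (PS K n), ↑S ⊆ X ∧ S.card = t ∧ q ∈ spanSet K ↑S}

/-- `𝒮(X,q)`: the set of finite subsets of `X` of minimal cardinality whose span contains `q`. -/
def Sq {n : ℕ} (X : Set (PS K n)) (q : PS K n) : Set (Finset (PS K n)) :=
  {S | ↑S ⊆ X ∧ S.card = Xrank K X q ∧ q ∈ spanSet K ↑S}

/-- The `k`-th secant variety of `X`. -/
def secant {n : ℕ} (X : Set (PS K n)) (k : ℕ) : Set (PS K n) :=
  zclosure K (⋃ S ∈ {S : Finset (PS K n) | ↑S ⊆ X ∧ S.card = k}, spanSet K (S : Set (PS K n)))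

/-- The generic `X`-rank: the least `k` with `σ_k(X) = ℙ^{n-1}`. -/
def genRank {n : ℕ} (X : Set (PS K n)) : ℕ :=
  sInf {k | 0 < k ∧ secant K X k = Set.univ}

/-- The border `X`-rank of a point. -/
def borderRank {n : ℕ} (X : Set (PS K n)) (q : PS K n) : ℕ :=
  sInf {k | 0 < k ∧ q ∈ secant K X k}

/-- `X ⊆ ℙ^{m-1}` of dimension `dX` is not defective: every secant variety has the expected
dimension. -/
def NotDefective {m : ℕ} (X : Set (PS K m)) (dX : ℕ) : Prop :=
  ∀ k : ℕ, 0 < k → zdim K (secant K X k) = min (m - 1) (k * (dX + 1) - 1)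

/- ### Rational normal curves -/

/-- `X ⊆ ℙ^{n-1}` is a rational normal curve: up to a linear change of coordinates it is the
image of `ℙ^1` under the degree-`(n-1)` Veronese map. -/
def IsRNC {n : ℕ} (X : Set (PS K n)) : Prop :=
  ∃ g : (Fin n → K) ≃ₗ[K] (Fin n → K),
    X = {p | ∃ v : Fin 2 → K,
      ∃ hv : g (fun i => v 0 ^ (i : ℕ) * v 1 ^ (n - 1 - (i : ℕ))) ≠ 0,
      p = Projectivization.mk K (g (fun i => v 0 ^ (i : ℕ) * v 1 ^ (n - 1 - (i : ℕ)))) hv}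

/- ### Linear projections and linear normality -/

/-- The pull-back map on polynomials induced by a linear map `π : K^{n+1} → K^n`. -/
def pullback {n m : ℕ} (π : (Fin m → K) →ₗ[K] (Fin n → K)) :
    MvPolynomial (Fin n) K →ₐ[K] MvPolynomial (Fin m) K :=
  aeval (fun i => ∑ j : Fin m, MvPolynomial.C (π (Pi.single j 1) i) * MvPolynomial.X j)

/-- The image of a set of points under the projection induced by `π`. -/
def projImage {n m : ℕ} (π : (Fin m → K) →ₗ[K] (Fin n → K)) (Y : Set (PS K m)) :
    Set (PS K n) :=
  {q | ∃ p ∈ Y, ∃ h : π p.rep ≠ 0, q = Projectivization.mk K (π p.rep) h}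

/-- The linear projection from the point `o` (encoded by the linear map `π` with kernel the
line of `o`) restricts to an embedding of `Y`: `o ∉ Y` and `o` lies on no secant or tangent
line of `Y`, i.e. on the span of no degree-2 subscheme of `Y`. -/
def EmbedsFrom {n : ℕ} (π : (Fin (n + 1) → K) →ₗ[K] (Fin n → K)) (o : PS K (n + 1))
    (Y : Set (PS K (n + 1))) : Prop :=
  Function.Surjective π ∧
  LinearMap.ker π = Submodule.span K {o.rep} ∧ o ∉ Y ∧
  ∀ I : Ideal (MvPolynomial (Fin (n + 1)) K),
    IsHomogIdeal K I → SubschemeOf K Y I → SchemeDeg K I 2 → o ∉ schemeSpan K I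

/-- `X ⊆ ℙ^{n-1}` is linearly normal: it is not an isomorphic linear projection of a
non-degenerate variety in `ℙ^n`. -/
def LinearlyNormal {n : ℕ} (X : Set (PS K n)) : Prop :=
  ¬ ∃ (Y : Set (PS K (n + 1))) (o : PS K (n + 1))
      (π : (Fin (n + 1) → K) →ₗ[K] (Fin n → K)),
      IsVariety K Y ∧ EmbedsFrom K π o Y ∧ projImage K π Y = X

/- ### Tangent spaces and smooth points -/

/-- The (affine cone over the) embedded tangent space of `X` at `p`: the common kernel of the
differentials at `p` of all elements of the vanishing ideal of `X`. -/
def tangentSub {n : ℕ} (X : Set (PS K n)) (p : PS K n) : Submodule K (Fin n → K) :=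
  ⨅ f ∈ hVanish K X, LinearMap.ker
    (∑ j : Fin n, eval p.rep (pderiv j f) • (LinearMap.proj j : (Fin n → K) →ₗ[K] K))

/-- `p` is a smooth point of `X`. -/
def SmoothAt {n : ℕ} (X : Set (PS K n)) (p : PS K n) : Prop :=
  p ∈ X ∧ Module.finrank K (tangentSub K X p) = zdim K X + 1

/-- A smooth integral non-degenerate projective variety. -/
def SmoothVariety {n : ℕ} (X : Set (PS K n)) : Prop :=
  IsVariety K X ∧ ∀ p ∈ X, SmoothAt K X p

section helper
open scoped TensorProduct IntermediateField

theorem mem_range_of_tensor_nilpotent {F L : Type*} [Field F] [CharZero F] [Field L] [Algebra F L]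
    (y : L) (hnil : IsNilpotent (y ⊗ₜ[F] (1 : L) - (1 : L) ⊗ₜ[F] y)) :
    y ∈ (algebraMap F L).range := by
  have halg : IsAlgebraic F y := by
    by_contra htr
    obtain ⟨N, hN⟩ := hnil
    have htr : Transcendental F y := htr
    have hli : LinearIndependent F (fun n : ℕ => y ^ n) := by
      have := (Polynomial.basisMonomials F).linearIndependent.map_injOn
        (Polynomial.aeval y).toLinearMap
        ((transcendental_iff_injective.mp htr).injOn)
      convert this using 2
      simp
    have h2 := (hli.tmul_of_flat_left hli).comp (fun m : ℕ => (m, N - m))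
      (fun a b hab => (Prod.ext_iff.mp hab).1)
    rw [linearIndependent_iff'] at h2
    have h3 := h2 (Finset.range (N + 1)) (fun m => (-1) ^ (N - m) * (N.choose m : F)) ?_ N (by simp)
    · simp at h3
    · rw [← hN, sub_eq_add_neg, add_pow]
      refine Finset.sum_congr rfl fun m _ => ?_
      rw [neg_pow (1 ⊗ₜ[F] y : L ⊗[F] L), Algebra.TensorProduct.tmul_pow, Algebra.TensorProduct.tmul_pow]
      simp only [one_pow, Function.comp]
      have : (((-1) ^ (N - m) * (N.choose m : F)) : F) • ((y ^ m) ⊗ₜ[F] (y ^ (N - m))) =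
        algebraMap F (L ⊗[F] L) ((-1) ^ (N - m) * (N.choose m : F)) * ((y ^ m) ⊗ₜ[F] (y ^ (N - m))) :=
          Algebra.smul_def _ _
      rw [this]
      have h5 : ((y ^ m) ⊗ₜ[F] (y ^ (N - m))) = ((y ^ m) ⊗ₜ[F] (1 : L)) * ((1 : L) ⊗ₜ[F] (y ^ (N - m))) := by
        simp
      rw [h5, map_mul, map_pow, map_neg, map_one, map_natCast]
      ring
  have heq : (y ⊗ₜ[F] (1 : L)) = (1 : L) ⊗ₜ[F] y := by
    have hr : ∀ p : Polynomial F, Polynomial.aeval ((1 : L) ⊗ₜ[F] y) p =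
        (1 : L) ⊗ₜ[F] Polynomial.aeval y p := fun p =>
      Polynomial.aeval_algHom_apply (Algebra.TensorProduct.includeRight : L →ₐ[F] L ⊗[F] L) y p
    have hl : ∀ p : Polynomial F, Polynomial.aeval (y ⊗ₜ[F] (1 : L)) p =
        (Polynomial.aeval y p) ⊗ₜ[F] (1 : L) := fun p =>
      Polynomial.aeval_algHom_apply (Algebra.TensorProduct.includeLeft : L →ₐ[F] L ⊗[F] L) y p
    have := Polynomial.existsUnique_nilpotent_sub_and_aeval_eq_zero (R := F) (S := L ⊗[F] L)
      (P := minpoly F y) (x := (1 : L) ⊗ₜ[F] y) ?_ ?_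
    · refine this.unique ⟨?_, ?_⟩ ⟨?_, ?_⟩
      · rw [← neg_sub]; exact hnil.neg
      · rw [hl, minpoly.aeval, TensorProduct.zero_tmul]
      · rw [sub_self]; exact IsNilpotent.zero
      · rw [hr, minpoly.aeval, TensorProduct.tmul_zero]
    · rw [hr, minpoly.aeval, TensorProduct.tmul_zero]; exact IsNilpotent.zero
    · rw [hr]
      have hsep : (minpoly F y).Separable := (minpoly.irreducible halg.isIntegral).separable
      have h0 := hsep.aeval_derivative_ne_zero (minpoly.aeval F y)
      exact (IsUnit.mk0 _ h0).map (Algebra.TensorProduct.includeRight : L →ₐ[F] L ⊗[F] L)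
  by_contra hy
  have hli : LinearIndependent F ![1, y] := by
    rw [LinearIndependent.pair_iff' one_ne_zero]
    intro a ha
    exact hy ⟨a, by rw [← ha, Algebra.smul_def, mul_one]⟩
  have h2 := (hli.tmul_of_flat_left hli).injective
  have h3 := @h2 (1, 0) (0, 1) (by simpa using heq)
  simp at h3
theorem mobius_of_adjoin {K L : Type*} [Field K] [Field L] [Algebra K L] (x y : L)
    (hx : Transcendental K x) (hyx : y ∈ K⟮x⟯) (hxy : x ∈ K⟮y⟯) :
    ∃ a b c d : K, (c ≠ 0 ∨ d ≠ 0) ∧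
      y * (algebraMap K L c * x + algebraMap K L d) = algebraMap K L a * x + algebraMap K L b := by
  have hle : nonZeroDivisors (Polynomial K) ≤ Submonoid.comap (Polynomial.aeval (R := K) x)
      (nonZeroDivisors L) := by
    intro p hp
    rw [Submonoid.mem_comap, mem_nonZeroDivisors_iff_ne_zero]
    rw [mem_nonZeroDivisors_iff_ne_zero] at hp
    intro h0
    exact hp ((transcendental_iff.mp hx) p h0)
  let e : RatFunc K →ₐ[K] L := RatFunc.liftAlgHom (Polynomial.aeval x) hle
  have hpoly : ∀ p : Polynomial K, e (algebraMap _ _ p) = Polynomial.aeval x p := by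
    intro p
    have := RatFunc.liftAlgHom_apply_div (Polynomial.aeval (R := K) x) hle p 1
    simpa using this
  have heX : e RatFunc.X = x := by
    rw [← RatFunc.algebraMap_X, hpoly, Polynomial.aeval_X]
  have hy : ∃ f, e f = y := by
    have : y ∈ (⊤ : IntermediateField K (RatFunc K)).map e := by
      rw [← RatFunc.adjoin_X, IntermediateField.adjoin_map]
      simpa [heX] using hyx
    obtain ⟨f, -, hf⟩ := this
    exact ⟨f, hf⟩
  obtain ⟨f, rfl⟩ := hy
  have hX : (RatFunc.X : RatFunc K) ∈ K⟮f⟯ := by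
    have : x ∈ (K⟮f⟯).map e := by
      rw [IntermediateField.adjoin_map]
      simpa using hxy
    obtain ⟨g, hg, hg'⟩ := this
    have : g = RatFunc.X := e.injective (hg'.trans heX.symm)
    rwa [← this]
  have htop : K⟮f⟯ = ⊤ := by
    rw [eq_top_iff, ← RatFunc.adjoin_X, IntermediateField.adjoin_le_iff]
    simpa using hX
  have hdeg := RatFunc.finrank_eq_max_natDegree f
  rw [htop, IntermediateField.finrank_top] at hdeg
  have h1 : f.num.natDegree ≤ 1 := by omega
  have h2 : f.denom.natDegree ≤ 1 := by omega
  obtain ⟨a, b, hab⟩ := Polynomial.exists_eq_X_add_C_of_natDegree_le_one h1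
  obtain ⟨c, d, hcd⟩ := Polynomial.exists_eq_X_add_C_of_natDegree_le_one h2
  refine ⟨a, b, c, d, ?_, ?_⟩
  · by_contra! hcon
    apply RatFunc.denom_ne_zero f
    rw [hcd, hcon.1, hcon.2]; simp
  · have h3 : f * algebraMap _ _ f.denom = algebraMap _ _ f.num := by
      have h5 : algebraMap (Polynomial K) (RatFunc K) f.denom ≠ 0 := by
        simpa using RatFunc.denom_ne_zero f
      exact ((div_eq_iff h5).mp (RatFunc.num_div_denom f)).symm
    have h4 := congrArg e h3
    rw [map_mul, hpoly, hpoly, hcd, hab] at h4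
    simpa using h4

theorem mem_adjoin_of_inj {K L σ : Type*} [Field K] [IsAlgClosed K] [CharZero K] [Field L]
    [Algebra K L] [Finite σ] (I : Ideal (MvPolynomial σ K)) (i j : σ)
    (hinj : ∀ w w' : σ → K, (∀ f ∈ I, eval w f = 0) → (∀ f ∈ I, eval w' f = 0) →
      w i = w' i → w j = w' j)
    (ξ : σ → L) (hξ : ∀ f ∈ I, aeval ξ f = 0) : ξ j ∈ K⟮ξ i⟯ := by
  let F := K⟮ξ i⟯
  let inl : MvPolynomial σ K →ₐ[K] MvPolynomial (σ ⊕ σ) K := rename Sum.inl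
  let inr : MvPolynomial σ K →ₐ[K] MvPolynomial (σ ⊕ σ) K := rename Sum.inr
  let J : Ideal (MvPolynomial (σ ⊕ σ) K) :=
    I.map inl ⊔ I.map inr ⊔ Ideal.span {X (Sum.inl i) - X (Sum.inr i)}
  have hJ : (X (Sum.inl j) - X (Sum.inr j) : MvPolynomial (σ ⊕ σ) K) ∈ J.radical := by
    rw [← vanishingIdeal_zeroLocus_eq_radical (K := K)]
    rw [mem_vanishingIdeal_iff]
    intro z hz
    have h1 := hinj (z ∘ Sum.inl) (z ∘ Sum.inr) ?_ ?_ ?_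
    · simp only [map_sub, aeval_X]
      exact sub_eq_zero.mpr h1
    · intro f hf
      have := hz (inl f) (Ideal.mem_sup_left (Ideal.mem_sup_left (Ideal.mem_map_of_mem _ hf)))
      simpa [inl, aeval_rename] using this
    · intro f hf
      have := hz (inr f) (Ideal.mem_sup_left (Ideal.mem_sup_right (Ideal.mem_map_of_mem _ hf)))
      simpa [inr, aeval_rename] using this
    · have := hz (X (Sum.inl i) - X (Sum.inr i)) (Ideal.mem_sup_right (Ideal.subset_span rfl))
      simpa [sub_eq_zero] using this
  obtain ⟨N, hN⟩ := hJ
  -- evaluate in the tensor product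
  let il : L →ₐ[K] L ⊗[F] L := (Algebra.TensorProduct.includeLeft : L →ₐ[F] L ⊗[F] L).restrictScalars K
  let ir : L →ₐ[K] L ⊗[F] L := (Algebra.TensorProduct.includeRight : L →ₐ[F] L ⊗[F] L).restrictScalars K
  let ev : MvPolynomial (σ ⊕ σ) K →ₐ[K] L ⊗[F] L :=
    aeval (Sum.elim (fun s => il (ξ s)) (fun s => ir (ξ s)))
  have hev : J ≤ RingHom.ker ev := by
    refine sup_le (sup_le ?_ ?_) ?_
    · rw [Ideal.map_le_iff_le_comap]
      intro f hf
      have : ev (inl f) = il (aeval ξ f) := by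
        simp only [ev, inl, aeval_rename, Sum.elim_comp_inl]
        rw [← AlgHom.comp_apply, comp_aeval]
      rw [Ideal.mem_comap, RingHom.mem_ker]
      exact this.trans (by rw [hξ f hf, map_zero])
    · rw [Ideal.map_le_iff_le_comap]
      intro f hf
      have : ev (inr f) = ir (aeval ξ f) := by
        simp only [ev, inr, aeval_rename, Sum.elim_comp_inr]
        rw [← AlgHom.comp_apply, comp_aeval]
      rw [Ideal.mem_comap, RingHom.mem_ker]
      exact this.trans (by rw [hξ f hf, map_zero])
    · rw [Ideal.span_le, Set.singleton_subset_iff]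
      simp only [SetLike.mem_coe, RingHom.mem_ker, map_sub, ev, aeval_X, Sum.elim_inl, Sum.elim_inr]
      rw [sub_eq_zero]
      exact Algebra.TensorProduct.tmul_one_eq_one_tmul (A := L) (B := L)
        (⟨ξ i, IntermediateField.mem_adjoin_simple_self K _⟩ : F)
  have hnil : IsNilpotent ((ξ j) ⊗ₜ[F] (1 : L) - (1 : L) ⊗ₜ[F] (ξ j)) := by
    refine ⟨N, ?_⟩
    have := hev hN
    rw [RingHom.mem_ker, map_pow, map_sub] at this
    simp only [ev, aeval_X, Sum.elim_inl, Sum.elim_inr] at this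
    exact this
  obtain ⟨z, hz⟩ := mem_range_of_tensor_nilpotent (F := F) (ξ j) hnil
  rw [← hz]
  exact z.2

theorem homog_eval_smul {K σ : Type*} [Field K] {f : MvPolynomial σ K} {d : ℕ}
    (hf : f.IsHomogeneous d) (c : K) (v : σ → K) : eval (c • v) f = c ^ d * eval v f := by
  rw [eval_eq, eval_eq, Finset.mul_sum]
  refine Finset.sum_congr rfl fun m hm => ?_
  have h1 : ∑ i ∈ m.support, m i = d := by
    have := hf (mem_support_iff.mp hm)
    rw [← this, Finsupp.weight_apply]
    simp [Finsupp.sum]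
  simp only [Pi.smul_apply, smul_eq_mul, mul_pow, Finset.prod_mul_distrib]
  rw [Finset.prod_pow_eq_pow_sum, h1]
  ring

theorem exists_homogenization {K : Type*} [Field K] {r : ℕ} (f : MvPolynomial (Fin (r + 1)) K) :
    ∃ (d : ℕ) (F : MvPolynomial (Fin (r + 1)) K), F.IsHomogeneous d ∧
      ∀ y : Fin (r + 1) → K, y 0 = 1 → eval y F = eval y f := by
  refine ⟨f.totalDegree, ∑ i ∈ Finset.range (f.totalDegree + 1),
    X 0 ^ (f.totalDegree - i) * homogeneousComponent i f, ?_, ?_⟩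
  · refine IsHomogeneous.sum _ _ _ fun i hi => ?_
    have := (isHomogeneous_X_pow (R := K) (0 : Fin (r + 1)) (f.totalDegree - i)).mul
      (homogeneousComponent_isHomogeneous i f)
    have hi' : f.totalDegree - i + i = f.totalDegree := by
      have := Finset.mem_range.mp hi
      omega
    rwa [hi'] at this
  · intro y hy
    conv_rhs => rw [← sum_homogeneousComponent f]
    simp [map_sum, hy]

/-- Abstract properties of the cone over our variety in adapted coordinates. -/
structure GoodCone {K : Type*} [Field K] {r : ℕ} (Y : Set (Fin (r + 1) → K)) : Prop where
  ne0 : ∀ y ∈ Y, y ≠ 0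
  smul : ∀ (c : K) (y), c ≠ 0 → y ∈ Y → c • y ∈ Y
  prime : ∀ (f g : MvPolynomial (Fin (r + 1)) K) (d e : ℕ), f.IsHomogeneous d →
    g.IsHomogeneous e → (∀ y ∈ Y, eval y f * eval y g = 0) →
    (∀ y ∈ Y, eval y f = 0) ∨ (∀ y ∈ Y, eval y g = 0)
  closed : ∀ y : Fin (r + 1) → K, y ≠ 0 → (∀ (f : MvPolynomial (Fin (r + 1)) K) (d : ℕ),
    f.IsHomogeneous d → (∀ z ∈ Y, eval z f = 0) → eval y f = 0) → y ∈ Y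
  single : ∀ i, Pi.single i 1 ∈ Y
  inj : ∀ i, i ≠ 0 → ∀ y ∈ Y, ∀ z ∈ Y, y 0 = 1 → z 0 = 1 → y i = z i → y = z

namespace GoodCone

variable {K : Type} [Field K] {r : ℕ} {Y : Set (Fin (r + 1) → K)}

theorem lin (hY : GoodCone Y) {i j : Fin (r + 1)} (hij : i ≠ j) (a b : K)
    (h : ∀ y ∈ Y, a * y i + b * y j = 0) : a = 0 ∧ b = 0 := by
  have h1 := h _ (hY.single i)
  have h2 := h _ (hY.single j)
  simp [hij, hij.symm] at h1 h2
  exact ⟨h1, h2⟩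

theorem prime_lin (hY : GoodCone Y) (i j k l : Fin (r + 1)) (a b c d : K)
    (h : ∀ y ∈ Y, (a * y i + b * y j) * (c * y k + d * y l) = 0) :
    (∀ y ∈ Y, a * y i + b * y j = 0) ∨ (∀ y ∈ Y, c * y k + d * y l = 0) := by
  have := hY.prime (C a * X i + C b * X j) (C c * X k + C d * X l) 1 1
    ((isHomogeneous_C_mul_X a i).add (isHomogeneous_C_mul_X b j))
    ((isHomogeneous_C_mul_X c k).add (isHomogeneous_C_mul_X d l)) (by simpa using h)
  simpa using this

/-- polynomial relations on the chart `y 0 = 1`. -/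
def ideal (Y : Set (Fin (r + 1) → K)) : Ideal (MvPolynomial (Fin (r + 1)) K) where
  carrier := {f | ∀ y ∈ Y, y 0 = 1 → eval y f = 0}
  add_mem' := by
    intro a b ha hb y hy h0
    rw [map_add, ha y hy h0, hb y hy h0, add_zero]
  zero_mem' := by intro y _ _; simp
  smul_mem' := by
    intro c x hx y hy h0
    rw [smul_eq_mul, map_mul, hx y hy h0, mul_zero]

theorem mem_ideal (f : MvPolynomial (Fin (r + 1)) K) :
    f ∈ ideal Y ↔ ∀ y ∈ Y, y 0 = 1 → eval y f = 0 := Iff.rfl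

theorem scale (hY : GoodCone Y) {y : Fin (r + 1) → K} (hy : y ∈ Y) (h0 : y 0 ≠ 0) :
    (y 0)⁻¹ • y ∈ Y ∧ ((y 0)⁻¹ • y) 0 = 1 :=
  ⟨hY.smul _ _ (inv_ne_zero h0) hy, by simp [h0]⟩

theorem eval_of_chart (hY : GoodCone Y) {f : MvPolynomial (Fin (r + 1)) K} {d : ℕ}
    (hf : f.IsHomogeneous d) (h : ∀ y ∈ Y, y 0 = 1 → eval y f = 0)
    {y : Fin (r + 1) → K} (hy : y ∈ Y) (h0 : y 0 ≠ 0) : eval y f = 0 := by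
  obtain ⟨h1, h2⟩ := hY.scale hy h0
  have h3 := h _ h1 h2
  rw [homog_eval_smul hf] at h3
  exact (mul_eq_zero.mp h3).resolve_left (pow_ne_zero _ (inv_ne_zero h0))

/-- a homogeneous polynomial that vanishes on the chart vanishes on `Y`. -/
theorem eval_of_chart' (hY : GoodCone Y) {f : MvPolynomial (Fin (r + 1)) K} {d : ℕ}
    (hf : f.IsHomogeneous d) (h : ∀ y ∈ Y, y 0 = 1 → eval y f = 0) :
    ∀ y ∈ Y, eval y f = 0 := by
  have h2 : ∀ y ∈ Y, eval y f * eval y (X 0 : MvPolynomial (Fin (r + 1)) K) = 0 := by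
    intro y hy
    by_cases h0 : y 0 = 0
    · simp [h0]
    · rw [hY.eval_of_chart hf h hy h0, zero_mul]
  rcases hY.prime f (X 0) d 1 hf (isHomogeneous_X _ _) h2 with h1 | h1
  · exact h1
  · have := h1 _ (hY.single 0)
    simp at this

theorem ideal_prime (hY : GoodCone Y) : (ideal Y).IsPrime := by
  refine ⟨?_, ?_⟩
  · intro h
    have h1 : (1 : MvPolynomial (Fin (r + 1)) K) ∈ ideal Y := h ▸ Submodule.mem_top
    have := h1 _ (hY.single 0) (by simp)
    simp at this
  · intro f g hfg
    obtain ⟨d, F, hF, hFf⟩ := exists_homogenization f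
    obtain ⟨e, G, hG, hGg⟩ := exists_homogenization g
    have h1 := hY.eval_of_chart' (hF.mul hG) (by
      intro y hy h0
      rw [map_mul, hFf y h0, hGg y h0, ← map_mul]
      exact hfg y hy h0)
    simp only [map_mul] at h1
    rcases hY.prime F G d e hF hG h1 with h2 | h2
    · left; intro y hy h0; rw [← hFf y h0]; exact h2 y hy
    · right; intro y hy h0; rw [← hGg y h0]; exact h2 y hy

theorem mem_of_ideal (hY : GoodCone Y) (w : Fin (r + 1) → K)
    (hw : ∀ f ∈ ideal Y, eval w f = 0) : w ∈ Y ∧ w 0 = 1 := by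
  have h0 : w 0 = 1 := by
    have := hw (X 0 - 1) (by intro y _ h0; simp [h0])
    simpa [sub_eq_zero] using this
  refine ⟨hY.closed w ?_ ?_, h0⟩
  · rintro rfl; simp at h0
  · intro f d hf hfY
    exact hw f (fun y hy _ => hfY y hy)

variable [IsAlgClosed K]

theorem transc (hY : GoodCone Y) {L : Type*} [Field L] [Algebra K L] (ξ : Fin (r + 1) → L)
    (hξ : ∀ f, aeval ξ f = 0 ↔ f ∈ ideal Y) (i : Fin (r + 1)) (hi : i ≠ 0) :
    Transcendental K (ξ i) := by
  intro halg
  obtain ⟨c, hc⟩ : ∃ c, algebraMap K L c = ξ i := by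
    have := IntermediateField.isAlgebraic_adjoin_simple (K := K) halg.isIntegral
    have h2 := IntermediateField.eq_bot_of_isAlgClosed_of_isAlgebraic K⟮ξ i⟯
    have h3 := IntermediateField.mem_adjoin_simple_self K (ξ i)
    rw [h2, IntermediateField.mem_bot] at h3
    exact h3
  have h1 : (X i - C c : MvPolynomial (Fin (r + 1)) K) ∈ ideal Y := by
    rw [← hξ]; simp [hc]
  have h2 := h1 _ (hY.single 0) (by simp)
  have hc0 : c = 0 := by simpa [hi] using h2
  subst hc0
  have h3 := hY.eval_of_chart' (isHomogeneous_X K i) (by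
    intro y hy h0
    have := h1 y hy h0
    simpa using this)
  have := h3 _ (hY.single i)
  simp at this

theorem exists_generic (hY : GoodCone Y) : ∃ (L : Type) (_ : Field L) (_ : Algebra K L)
    (ξ : Fin (r + 1) → L), ∀ f, aeval ξ f = 0 ↔ f ∈ ideal Y := by
  have := hY.ideal_prime
  let A := MvPolynomial (Fin (r + 1)) K ⧸ ideal Y
  refine ⟨FractionRing A, inferInstance, inferInstance,
    fun i => algebraMap A _ (Ideal.Quotient.mk _ (X i)), fun f => ?_⟩
  have h1 : aeval (fun i => algebraMap A (FractionRing A) (Ideal.Quotient.mk _ (X i))) f =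
      algebraMap A (FractionRing A) (Ideal.Quotient.mk _ f) := by
    let φ : MvPolynomial (Fin (r + 1)) K →ₐ[K] FractionRing A :=
      (IsScalarTower.toAlgHom K A (FractionRing A)).comp (Ideal.Quotient.mkₐ K (ideal Y))
    have : φ = aeval (fun i => φ (X i)) := aeval_unique φ
    exact (congrArg (fun ψ => ψ f) this).symm
  rw [h1, ← Ideal.Quotient.eq_zero_iff_mem]
  exact (IsFractionRing.injective A (FractionRing A)).eq_iff' (map_zero _)

theorem poly_zero (hY : GoodCone Y) (i : Fin (r + 1)) (hi : i ≠ 0) (p : Polynomial K)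
    (hp : ∀ y ∈ Y, y 0 = 1 → p.eval (y i) = 0) : p = 0 := by
  obtain ⟨L, _, _, ξ, hξ⟩ := hY.exists_generic
  have h1 := transcendental_iff.mp (hY.transc ξ hξ i hi) p
  apply h1
  have h2 : Polynomial.aeval (X i : MvPolynomial (Fin (r + 1)) K) p ∈ ideal Y := by
    intro y hy h0
    have h3 : ∀ q : Polynomial K, eval y (Polynomial.aeval (X i : MvPolynomial (Fin (r + 1)) K) q)
        = q.eval (y i) := by
      intro q
      induction q using Polynomial.induction_on' with
      | add p q hp hq => simp [hp, hq]
      | monomial n a => simp [Polynomial.aeval_monomial, algebraMap_eq]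
    rw [h3]; exact hp y hy h0
  rw [← hξ, ← Polynomial.aeval_algHom_apply] at h2
  simpa using h2

theorem relation (hY : GoodCone Y) [CharZero K] (i j : Fin (r + 1)) (hi : i ≠ 0) (hj : j ≠ 0)
    (hij : i ≠ j) : ∃ a c d : K, a ≠ 0 ∧ c ≠ 0 ∧ d ≠ 0 ∧
      ∀ y ∈ Y, y j * (c * y i + d * y 0) = a * y i * y 0 := by
  obtain ⟨L, _, _, ξ, hξ⟩ := hY.exists_generic
  have key : ∀ i j : Fin (r + 1), i ≠ 0 → ξ j ∈ K⟮ξ i⟯ := by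
    intro i j hi
    refine mem_adjoin_of_inj (ideal Y) i j ?_ ξ (fun f hf => (hξ f).mpr hf)
    intro w w' hw hw' hww
    obtain ⟨h1, h2⟩ := hY.mem_of_ideal w hw
    obtain ⟨h3, h4⟩ := hY.mem_of_ideal w' hw'
    rw [hY.inj i hi w h1 w' h3 h2 h4 hww]
  obtain ⟨a, b, c, d, hcd, hrel⟩ := mobius_of_adjoin (ξ i) (ξ j) (hY.transc ξ hξ i hi)
    (key i j hi) (key j i hj)
  have h1 : (X j * (C c * X i + C d) - (C a * X i + C b) : MvPolynomial (Fin (r + 1)) K)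
      ∈ ideal Y := by
    rw [← hξ]; simp only [map_sub, map_mul, map_add, aeval_X, aeval_C]
    rw [hrel, sub_self]
  have hb : b = 0 := by
    have := h1 _ (hY.single 0) (by simp)
    simpa [hi, hj] using this
  subst hb
  have h2 : (X j * (C c * X i + C d * X 0) - C a * X i * X 0 :
      MvPolynomial (Fin (r + 1)) K).IsHomogeneous (1 + 1) :=
    IsHomogeneous.sub
      ((isHomogeneous_X K j).mul ((isHomogeneous_C_mul_X c i).add (isHomogeneous_C_mul_X d 0)))
      ((isHomogeneous_C_mul_X a i).mul (isHomogeneous_X K 0))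
  have h3 := hY.eval_of_chart' h2 (by
    intro y hy h0
    have := h1 y hy h0
    simpa [h0] using this)
  have h4 : ∀ y ∈ Y, y j * (c * y i + d * y 0) = a * y i * y 0 := by
    intro y hy
    have := h3 y hy
    simpa [sub_eq_zero] using this
  refine ⟨a, c, d, ?_, ?_, ?_, h4⟩
  · rintro rfl
    rcases hY.prime_lin j i i 0 1 0 c d (by intro y hy; simpa using h4 y hy) with h5 | h5
    · have := hY.lin hij.symm _ _ h5; simp at this
    · have := hY.lin hi _ _ h5; tauto
  · rintro rfl
    rcases hY.prime_lin 0 i j i 1 0 d (-a) (by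
      intro y hy; have := h4 y hy; linear_combination this) with h5 | h5
    · have := hY.lin hi.symm _ _ h5; simp at this
    · have := hY.lin hij.symm _ _ h5; tauto
  · rintro rfl
    rcases hY.prime_lin i 0 j 0 1 0 c (-a) (by
      intro y hy; have := h4 y hy; linear_combination this) with h5 | h5
    · have := hY.lin hi _ _ h5; simp at this
    · have := hY.lin hj _ _ h5; tauto

end GoodCone

/-- products of all but one of the linear forms `c k * v 1 + d k * v 0`. -/
def phi {K : Type} [Field K] {r : ℕ} (c d : Fin (r + 1) → K) (v : Fin 2 → K) : Fin (r + 1) → K :=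
  fun j => ∏ k ∈ Finset.univ.erase j, (c k * v 1 + d k * v 0)

section phi
variable {K : Type} [Field K] {r : ℕ} (c d : Fin (r + 1) → K)

theorem phi_smul (t : K) (v : Fin 2 → K) : phi c d (t • v) = t ^ r • phi c d v := by
  funext j
  have : (Finset.univ.erase j).card = r := by simp
  simp only [phi, Pi.smul_apply, smul_eq_mul]
  have h2 : t ^ r = ∏ _k ∈ Finset.univ.erase j, t := by rw [Finset.prod_const, this]
  rw [h2, ← Finset.prod_mul_distrib]
  exact Finset.prod_congr rfl fun k _ => by ring

theorem phi_root (h : ∀ i j, i ≠ j → c i * d j ≠ c j * d i) (j : Fin (r + 1)) :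
    ∃ t : K, t ≠ 0 ∧ phi c d ![c j, - d j] = t • Pi.single j 1 := by
  refine ⟨phi c d ![c j, - d j] j, ?_, ?_⟩
  · refine Finset.prod_ne_zero_iff.mpr fun k hk => ?_
    have := h k j (Finset.ne_of_mem_erase hk)
    simp only [Matrix.cons_val_one, Matrix.cons_val_zero]
    intro h0
    apply this
    simp at h0
    linear_combination -h0
  · funext k
    by_cases hkj : k = j
    · subst hkj; simp
    · simp only [Pi.smul_apply, Pi.single_eq_of_ne hkj, smul_zero]
      refine Finset.prod_eq_zero (i := j) (by simp [Ne.symm hkj]) ?_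
      simp
      ring

theorem prod_expand {ι : Type*} [DecidableEq ι] (a b : ι → K) (s : Finset ι) :
    ∃ m : ℕ → K, ∀ v : Fin 2 → K, ∏ k ∈ s, (a k * v 1 + b k * v 0) =
      ∑ i ∈ Finset.range (s.card + 1), m i * (v 0 ^ i * v 1 ^ (s.card - i)) := by
  induction s using Finset.induction_on with
  | empty => exact ⟨fun _ => 1, fun v => by simp⟩
  | insert k s hk ih =>
    obtain ⟨m, hm⟩ := ih
    refine ⟨fun i => a k * (if i ≤ s.card then m i else 0) +
      b k * (if i = 0 then 0 else m (i - 1)), fun v => ?_⟩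
    rw [Finset.prod_insert hk, hm, Finset.card_insert_of_notMem hk, add_mul]
    simp only [add_mul, Finset.sum_add_distrib]
    congr 1
    · rw [Finset.sum_range_succ _ (s.card + 1), Finset.mul_sum]
      simp only [show ¬ (s.card + 1 ≤ s.card) by omega, if_false, mul_zero, zero_mul, add_zero]
      refine Finset.sum_congr rfl fun i hi => ?_
      have hi' : i ≤ s.card := by have := Finset.mem_range.mp hi; omega
      rw [if_pos hi', show s.card + 1 - i = (s.card - i) + 1 by omega, pow_succ]
      ring
    · rw [Finset.sum_range_succ' _ (s.card + 1), Finset.mul_sum]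
      simp only [if_true, mul_zero, zero_mul, add_zero]
      refine Finset.sum_congr rfl fun i hi => ?_
      rw [if_neg (by omega), show s.card + 1 - (i + 1) = s.card - i by omega, pow_succ]
      simp only [Nat.add_sub_cancel]
      ring

theorem phi_equiv (h : ∀ i j, i ≠ j → c i * d j ≠ c j * d i) :
    ∃ M : (Fin (r + 1) → K) ≃ₗ[K] (Fin (r + 1) → K), ∀ v : Fin 2 → K,
      M (fun i => v 0 ^ (i : ℕ) * v 1 ^ (r + 1 - 1 - (i : ℕ))) = phi c d v := by
  have h1 : ∀ j : Fin (r + 1), ∃ m : ℕ → K, ∀ v : Fin 2 → K, phi c d v j =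
      ∑ i ∈ Finset.range (r + 1), m i * (v 0 ^ i * v 1 ^ (r - i)) := by
    intro j
    obtain ⟨m, hm⟩ := prod_expand c d (Finset.univ.erase j)
    have : (Finset.univ.erase j).card = r := by simp
    rw [this] at hm
    exact ⟨m, hm⟩
  choose m hm using h1
  let M₀ : (Fin (r + 1) → K) →ₗ[K] (Fin (r + 1) → K) :=
    Matrix.mulVecLin (Matrix.of fun j (i : Fin (r + 1)) => m j i)
  have hM : ∀ v : Fin 2 → K,
      M₀ (fun i => v 0 ^ (i : ℕ) * v 1 ^ (r + 1 - 1 - (i : ℕ))) = phi c d v := by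
    intro v
    funext j
    rw [hm, Finset.sum_range]
    simp [M₀, Matrix.mulVec, dotProduct]
  have hsurj : Function.Surjective M₀ := by
    rw [← LinearMap.range_eq_top, eq_top_iff, ← (Pi.basisFun K (Fin (r + 1))).span_eq,
      Submodule.span_le]
    rintro _ ⟨j, rfl⟩
    obtain ⟨t, ht, hphi⟩ := phi_root c d h j
    rw [← hM] at hphi
    have h2 : Pi.basisFun K (Fin (r + 1)) j = t⁻¹ • (t • (Pi.single j 1 : Fin (r + 1) → K)) := by
      rw [smul_smul, inv_mul_cancel₀ ht, one_smul, Pi.basisFun_apply]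
    rw [h2, ← hphi]
    exact Submodule.smul_mem _ _ ⟨_, rfl⟩
  exact ⟨LinearEquiv.ofBijective M₀ ⟨LinearMap.injective_iff_surjective.mpr hsurj, hsurj⟩, hM⟩

end phi

theorem GoodCone.exists_phi {K : Type} [Field K] [IsAlgClosed K] [CharZero K] {r : ℕ}
    {Y : Set (Fin (r + 1 + 1) → K)} (hY : GoodCone Y) :
    ∃ c d : Fin (r + 1 + 1) → K, (∀ i j, i ≠ j → c i * d j ≠ c j * d i) ∧
      ∀ y, y ∈ Y ↔ ∃ (v : Fin 2 → K) (t : K), t ≠ 0 ∧ phi c d v ≠ 0 ∧ y = t • phi c d v := by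
  have h1 : ∀ j : Fin (r + 1 + 1), ∃ c d : K, (j ≠ 0 → d ≠ 0) ∧ (j ≠ 1 → c ≠ 0) ∧
      (j = 0 → d = 0) ∧ (j = 1 → c = 0 ∧ d = 1) ∧
      ∀ y ∈ Y, y j * (c * y 1 + d * y 0) = y 1 * y 0 := by
    intro j
    by_cases h0 : j = 0
    · subst h0
      exact ⟨1, 0, by simp, by simp, by simp, by simp, fun y _ => by ring⟩
    by_cases h1 : j = 1
    · subst h1
      exact ⟨0, 1, by simp, by simp, by simp, by simp, fun y _ => by ring⟩
    obtain ⟨a, c, d, ha, hc, hd, h⟩ := hY.relation 1 j (by simp) h0 (Ne.symm h1)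
    refine ⟨c / a, d / a, fun _ => div_ne_zero hd ha, fun _ => div_ne_zero hc ha,
      fun h => absurd h h0, fun h => absurd h h1, fun y hy => ?_⟩
    have := h y hy
    field_simp
    linear_combination this
  choose c d hd hc hd0 hcd1 hrel using h1
  have hpair : ∀ i j, i ≠ j → c i * d j ≠ c j * d i := by
    intro i j hij heq
    rcases hY.prime_lin 1 0 i j (c i) (d i) (d i) (- d j) (by
      intro y hy
      have e1 := hrel i y hy
      have e2 := hrel j y hy
      linear_combination d i * (e1 - e2) - y j * y 1 * heq) with h5 | h5
    · have := hY.lin (by simp) _ _ h5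
      by_cases hi : i = 0
      · exact hc i (by rw [hi]; simp) this.1
      · exact hd i hi this.2
    · have := hY.lin hij _ _ h5
      by_cases hi : i = 0
      · exact hd j (by rintro rfl; exact hij hi) (by simpa using this.2)
      · exact hd i hi this.1
  -- generic points
  have hgen : ∀ y ∈ Y, y 0 ≠ 0 → y 1 ≠ 0 → ∃ t : K, t ≠ 0 ∧ y = t • phi c d ![y 0, y 1] := by
    intro y hy h0 h1
    have hL : ∀ k, c k * y 1 + d k * y 0 ≠ 0 := by
      intro k hk
      have := hrel k y hy
      rw [hk, mul_zero] at this
      exact mul_ne_zero h1 h0 this.symm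
    have hP : ∏ k, (c k * y 1 + d k * y 0) ≠ 0 := Finset.prod_ne_zero_iff.mpr fun k _ => hL k
    refine ⟨y 1 * y 0 / ∏ k, (c k * y 1 + d k * y 0),
      div_ne_zero (mul_ne_zero h1 h0) hP, ?_⟩
    funext j
    simp only [Pi.smul_apply, smul_eq_mul, phi, Matrix.cons_val_one, Matrix.cons_val_zero]
    rw [div_mul_eq_mul_div, eq_div_iff hP,
      ← Finset.mul_prod_erase Finset.univ (fun k => c k * y 1 + d k * y 0) (Finset.mem_univ j),
      ← hrel j y hy]
    ring
  have hcoord : ∀ y ∈ Y, ∀ j, (∀ k, k ≠ j → y k = 0) →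
      ∃ (v : Fin 2 → K) (t : K), t ≠ 0 ∧ phi c d v ≠ 0 ∧ y = t • phi c d v := by
    intro y hy j hk
    have hyj : y = y j • Pi.single j 1 := by
      funext k
      by_cases hkj : k = j
      · subst hkj; simp
      · simp [hk k hkj, Pi.single_eq_of_ne hkj]
    have hj0 : y j ≠ 0 := by
      intro h0
      apply hY.ne0 y hy
      rw [hyj, h0, zero_smul]
    obtain ⟨t, ht, hphi⟩ := phi_root c d hpair j
    refine ⟨![c j, - d j], y j / t, div_ne_zero hj0 ht, ?_, ?_⟩
    · rw [hphi]
      intro h0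
      have := congrFun h0 j
      simp [ht] at this
    · rw [hphi, smul_smul, div_mul_cancel₀ _ ht]
      exact hyj
  refine ⟨c, d, hpair, fun y => ⟨fun hy => ?_, ?_⟩⟩
  · by_cases h0 : y 0 = 0
    · obtain ⟨j, hj⟩ : ∃ j, y j ≠ 0 := by
        by_contra! hcon
        exact hY.ne0 y hy (funext hcon)
      refine hcoord y hy j fun k hkj => ?_
      have hj0 : j ≠ 0 := by rintro rfl; exact hj h0
      by_cases hk0 : k = 0
      · rw [hk0, h0]
      obtain ⟨a', c', d', ha, hc', hd', h⟩ := hY.relation j k hj0 hk0 (Ne.symm hkj)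
      have := h y hy
      rw [h0] at this
      simp [hj, hc'] at this
      exact this
    by_cases h1 : y 1 = 0
    · refine hcoord y hy 0 fun k hk => ?_
      have := hrel k y hy
      rw [h1] at this
      simpa [h0, hd k hk] using this
    · obtain ⟨t, ht, hyt⟩ := hgen y hy h0 h1
      refine ⟨_, t, ht, ?_, hyt⟩
      intro hz
      rw [hz, smul_zero] at hyt
      exact hY.ne0 y hy hyt
  · rintro ⟨v, t, ht, hne, rfl⟩
    refine hY.smul _ _ ht ?_
    by_cases hv0 : v 0 = 0
    · have hphi : phi c d v = phi c d v 1 • Pi.single 1 1 := by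
        funext k
        by_cases hk : k = 1
        · subst hk; simp
        · simp only [Pi.smul_apply, Pi.single_eq_of_ne hk, smul_zero]
          refine Finset.prod_eq_zero (i := 1) (by simp [Ne.symm hk]) ?_
          simp [(hcd1 1 rfl).1, hv0]
      rw [hphi]
      refine hY.smul _ _ ?_ (hY.single 1)
      intro hz
      rw [hz, zero_smul] at hphi
      exact hne hphi
    · refine hY.closed _ hne fun f n hf hfY => ?_
      let Q : Fin (r + 1 + 1) → Polynomial K := fun j =>
        ∏ k ∈ Finset.univ.erase j, (Polynomial.C (c k) * Polynomial.X + Polynomial.C (d k))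
      let p : Polynomial K := aeval Q f
      have hp : ∀ s : K, p.eval s = eval (phi c d ![1, s]) f := by
        intro s
        have e1 : (fun j => (Q j).eval s) = phi c d ![1, s] := by
          funext j
          simp [Q, phi, Polynomial.eval_prod]
        rw [← e1]
        have e2 : ((Polynomial.aeval s : Polynomial K →ₐ[K] K).comp (aeval Q)) f =
          aeval (fun j => Polynomial.aeval s (Q j)) f := by rw [comp_aeval]
        simpa [Polynomial.coe_aeval_eq_eval, p, aeval_eq_eval] using e2
      have hXp : Polynomial.X * p = 0 := by
        refine hY.poly_zero 1 (by simp) _ fun y hy h0 => ?_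
        rw [Polynomial.eval_mul, Polynomial.eval_X, hp]
        by_cases h1 : y 1 = 0
        · rw [h1, zero_mul]
        · obtain ⟨t, ht, hyt⟩ := hgen y hy (by rw [h0]; exact one_ne_zero) h1
          rw [h0] at hyt
          have e3 := hfY y hy
          rw [hyt, homog_eval_smul hf] at e3
          rw [(mul_eq_zero.mp e3).resolve_left (pow_ne_zero _ ht), mul_zero]
      have hp0 : p = 0 := (mul_eq_zero.mp hXp).resolve_left Polynomial.X_ne_zero
      have hv : v = v 0 • ![1, v 1 / v 0] := by
        funext k
        fin_cases k
        · simp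
        · simp [mul_div_cancel₀ _ hv0]
      rw [hv, phi_smul, homog_eval_smul hf, ← hp, hp0]
      simp

end helper

section bridge
variable {K : Type} [Field K]

theorem mem_zeros_mk {n : ℕ} {f : MvPolynomial (Fin n) K} {d : ℕ} (hf : f.IsHomogeneous d)
    (v : Fin n → K) (hv : v ≠ 0) : Projectivization.mk K v hv ∈ zeros K f ↔ eval v f = 0 := by
  refine ⟨fun h => h v hv rfl, fun h w hw hwv => ?_⟩
  obtain ⟨a, ha⟩ := (Projectivization.mk_eq_mk_iff' K _ _ hw hv).mp hwv
  rw [← ha, homog_eval_smul hf, h, mul_zero]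

theorem exists_subst {n : ℕ} (e : (Fin n → K) →ₗ[K] (Fin n → K)) {f : MvPolynomial (Fin n) K}
    {d : ℕ} (hf : f.IsHomogeneous d) : ∃ g : MvPolynomial (Fin n) K, g.IsHomogeneous d ∧
      ∀ v, eval v g = eval (e v) f := by
  refine ⟨aeval (fun i => ∑ j : Fin n, C (e (Pi.single j 1) i) * X j) f, ?_, ?_⟩
  · have := hf.aeval (S := K) (n := 1) (fun i => ∑ j : Fin n, C (e (Pi.single j 1) i) * X j)
      (fun i => IsHomogeneous.sum _ _ _ fun j _ => isHomogeneous_C_mul_X _ _)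
    rwa [one_mul] at this
  · intro v
    have e1 : ((aeval v : MvPolynomial (Fin n) K →ₐ[K] K).comp
        (aeval (fun i => ∑ j : Fin n, C (e (Pi.single j 1) i) * X j))) f =
        aeval (fun i => aeval v (∑ j : Fin n, C (e (Pi.single j 1) i) * X j :
          MvPolynomial (Fin n) K)) f := by rw [comp_aeval]
    have e2 : (fun i => aeval v (∑ j : Fin n, C (e (Pi.single j 1) i) * X j :
          MvPolynomial (Fin n) K)) = e v := by
      funext i
      conv_rhs => rw [pi_eq_sum_univ' v, map_sum]
      simp [map_smul, mul_comm]
    rw [e2] at e1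
    simpa [aeval_eq_eval] using e1

theorem exists_frame {r : ℕ} (X : Set (PS K (r + 1))) (hX : Nondeg K X) :
    ∃ e : (Fin (r + 1) → K) ≃ₗ[K] (Fin (r + 1) → K),
      ∀ i, ∃ h : e (Pi.single i 1) ≠ 0, Projectivization.mk K (e (Pi.single i 1)) h ∈ X := by
  obtain ⟨κ, a, -, hspan, hli⟩ := exists_linearIndependent' K
    (fun p : X => (p : PS K (r + 1)).rep)
  have htop : Submodule.span K (Set.range fun p : X => (p : PS K (r + 1)).rep) = ⊤ := by
    rw [← hX, projSpan]
    congr 1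
    ext v
    simp
  rw [htop] at hspan
  let b : Module.Basis κ K (Fin (r + 1) → K) := Module.Basis.mk hli hspan.ge
  have : Fintype κ := Module.Basis.fintypeIndexOfRankLtAleph0 b (Module.rank_lt_aleph0 K _)
  have hcard : Fintype.card κ = Fintype.card (Fin (r + 1)) := by
    rw [← Module.finrank_eq_card_basis b, Module.finrank_fintype_fun_eq_card]
  let b' := b.reindex (Fintype.equivOfCardEq hcard)
  refine ⟨b'.equivFun.symm, fun i => ?_⟩
  have h1 : b'.equivFun.symm (Pi.single i 1) = b' i := by
    rw [Module.Basis.equivFun_symm_apply]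
    simp [Pi.single_apply]
  have h2 : b' i = (a ((Fintype.equivOfCardEq hcard).symm i) : PS K (r + 1)).rep := by
    simp [b', b]
  rw [h1, h2]
  refine ⟨Projectivization.rep_nonzero _, ?_⟩
  rw [Projectivization.mk_rep]
  exact Subtype.coe_prop _

theorem goodCone_of {r : ℕ} (X : Set (PS K (r + 1))) (hX : IsVariety K X)
    (h : ∀ S : Finset (PS K (r + 1)), ↑S ⊆ X → S.card ≤ r + 1 → LinIndepSet K S)
    (e : (Fin (r + 1) → K) ≃ₗ[K] (Fin (r + 1) → K))
    (he : ∀ i, ∃ h : e (Pi.single i 1) ≠ 0, Projectivization.mk K (e (Pi.single i 1)) h ∈ X) :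
    GoodCone {y : Fin (r + 1) → K | ∃ h : e y ≠ 0, Projectivization.mk K (e y) h ∈ X} := by
  obtain ⟨⟨-, hclosed, hirr⟩, -⟩ := hX
  refine ⟨?_, ?_, ?_, ?_, he, ?_⟩
  · rintro y ⟨hy, -⟩ rfl
    exact hy (map_zero e)
  · rintro c y hc ⟨hy, hyX⟩
    have h1 : e (c • y) ≠ 0 := by rw [map_smul]; exact smul_ne_zero hc hy
    refine ⟨h1, ?_⟩
    have : Projectivization.mk K (e (c • y)) h1 = Projectivization.mk K (e y) hy :=
      (Projectivization.mk_eq_mk_iff' K _ _ _ _).mpr ⟨c, by rw [map_smul]⟩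
    rwa [this]
  · intro f g m n hf hg hfg
    obtain ⟨f', hf', hff⟩ := exists_subst e.symm.toLinearMap hf
    obtain ⟨g', hg', hgg⟩ := exists_subst e.symm.toLinearMap hg
    have hcl : ∀ (q : MvPolynomial (Fin (r + 1)) K) (k : ℕ), q.IsHomogeneous k →
        IsZClosed K (zeros K q) := by
      intro q k hq
      exact ⟨{q}, by rintro _ rfl; exact ⟨k, hq⟩, by simp⟩
    have hcov : X ⊆ zeros K f' ∪ zeros K g' := by
      intro p hp
      induction p using Projectivization.ind with
      | h v hv =>
        have h1 := hfg (e.symm v) ⟨by simpa using hv, by simpa using hp⟩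
        rcases mul_eq_zero.mp h1 with h2 | h2
        · left; rw [mem_zeros_mk hf', hff]; exact h2
        · right; rw [mem_zeros_mk hg', hgg]; exact h2
    rcases hirr _ _ (hcl f' m hf') (hcl g' n hg') hcov with h1 | h1
    · left
      rintro y ⟨hy, hyX⟩
      have := (mem_zeros_mk hf' _ hy).mp (h1 hyX)
      rw [hff] at this
      simpa using this
    · right
      rintro y ⟨hy, hyX⟩
      have := (mem_zeros_mk hg' _ hy).mp (h1 hyX)
      rw [hgg] at this
      simpa using this
  · intro y hy hfy
    have hey : e y ≠ 0 := by simpa using hy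
    refine ⟨hey, ?_⟩
    obtain ⟨F, hF, hXF⟩ := hclosed
    rw [hXF]
    simp only [Set.mem_iInter]
    intro f hfF
    obtain ⟨d, hf⟩ := hF f hfF
    rw [mem_zeros_mk hf]
    obtain ⟨g, hg, hgf⟩ := exists_subst e.toLinearMap hf
    have := hfy g d hg (by
      rintro z ⟨hz, hzX⟩
      rw [hgf]
      rw [hXF] at hzX
      simp only [Set.mem_iInter] at hzX
      exact (mem_zeros_mk hf _ hz).mp (hzX f hfF))
    rw [hgf] at this
    exact this
  · rintro i hi y ⟨hy, hyX⟩ z ⟨hz, hzX⟩ hy0 hz0 hyz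
    by_contra hne
    classical
    -- the r+1 points
    let w : Fin (r + 1) → (Fin (r + 1) → K) := fun k =>
      if k = 0 then y else if k = i then z else Pi.single k 1
    have hw : ∀ k, ∃ h : e (w k) ≠ 0, Projectivization.mk K (e (w k)) h ∈ X := by
      intro k
      by_cases h0 : k = 0
      · simp only [w, h0, if_true]; exact ⟨hy, hyX⟩
      · by_cases h1 : k = i
        · simp only [w, h1, hi, if_true, if_false]; exact ⟨hz, hzX⟩
        · simp only [w, h0, h1, if_false]; exact he k
    choose hw0 hwX using hw
    let q : Fin (r + 1) → PS K (r + 1) := fun k => Projectivization.mk K (e (w k)) (hw0 k)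
    have hwprop : ∀ k l, q k = q l → ∃ a : K, a • w l = w k := by
      intro k l hkl
      obtain ⟨a, ha⟩ := (Projectivization.mk_eq_mk_iff' K _ _ _ _).mp hkl
      exact ⟨a, e.injective (by rw [map_smul]; exact ha)⟩
    have hwi : ∀ k, k ≠ 0 → k ≠ i → w k = Pi.single k 1 := by
      intro k h0 h1; simp [w, h0, h1]
    have hw0' : w 0 = y := by simp [w]
    have hwi' : w i = z := by simp [w, hi]
    have hq : Function.Injective q := by
      have aux : ∀ k l, k ≠ 0 → k ≠ i → q k = q l → k = l := by
        intro k l h0 h1 hkl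
        obtain ⟨a, ha⟩ := hwprop k l hkl
        rw [hwi k h0 h1] at ha
        have ha0 := congrFun ha 0
        have hak := congrFun ha k
        by_cases hl0 : l = 0
        · subst hl0
          rw [hw0'] at ha0 hak
          simp [hy0, Ne.symm h0] at ha0
          simp [ha0] at hak
        by_cases hli : l = i
        · subst hli
          rw [hwi'] at ha0 hak
          simp [hz0, Ne.symm h0] at ha0
          simp [ha0] at hak
        rw [hwi l hl0 hli] at hak
        by_contra hkl'
        simp [Pi.single_eq_of_ne hkl'] at hak
      have aux2 : q 0 ≠ q i := by
        intro h0
        obtain ⟨a, ha⟩ := hwprop 0 i h0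
        rw [hw0', hwi'] at ha
        have ha0 := congrFun ha 0
        simp [hz0, hy0] at ha0
        rw [ha0, one_smul] at ha
        exact hne ha.symm
      intro k l hkl
      by_cases hk : k ≠ 0 ∧ k ≠ i
      · exact aux k l hk.1 hk.2 hkl
      by_cases hl : l ≠ 0 ∧ l ≠ i
      · exact (aux l k hl.1 hl.2 hkl.symm).symm
      have hk' : k = 0 ∨ k = i := by tauto
      have hl' : l = 0 ∨ l = i := by tauto
      rcases hk' with rfl | rfl <;> rcases hl' with rfl | rfl
      · rfl
      · exact absurd hkl aux2
      · exact absurd hkl.symm aux2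
      · rfl
    have hS := h (Finset.univ.image q) (by
      intro p hp
      simp only [Finset.coe_image, Finset.coe_univ, Set.image_univ, Set.mem_range] at hp
      obtain ⟨k, rfl⟩ := hp
      exact hwX k) (by rw [Finset.card_image_of_injective _ hq]; simp)
    rw [LinIndepSet, Finset.card_image_of_injective _ hq, Finset.card_univ, Fintype.card_fin] at hS
    have htop : projSpan K ((Finset.univ.image q : Finset (PS K (r + 1))) : Set (PS K (r + 1)))
        = ⊤ := by
      apply Submodule.eq_top_of_finrank_eq
      rw [hS]; simp
    let ℓ₀ : (Fin (r + 1) → K) →ₗ[K] K := LinearMap.proj i - (y i) • LinearMap.proj 0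
    let ℓ : (Fin (r + 1) → K) →ₗ[K] K := ℓ₀ ∘ₗ e.symm.toLinearMap
    have hker : projSpan K ((Finset.univ.image q : Finset (PS K (r + 1))) : Set (PS K (r + 1)))
        ≤ LinearMap.ker ℓ := by
      rw [projSpan, Submodule.span_le]
      rintro _ ⟨p, hp, rfl⟩
      simp only [Finset.coe_image, Finset.coe_univ, Set.image_univ, Set.mem_range] at hp
      obtain ⟨k, rfl⟩ := hp
      obtain ⟨a, ha⟩ := Projectivization.exists_smul_eq_mk_rep K (e (w k)) (hw0 k)
      rw [SetLike.mem_coe, LinearMap.mem_ker, ← ha, Units.smul_def, map_smul]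
      have : ℓ (e (w k)) = 0 := by
        simp only [ℓ, ℓ₀, LinearMap.comp_apply, LinearEquiv.coe_coe, LinearEquiv.symm_apply_apply,
          LinearMap.sub_apply, LinearMap.smul_apply, LinearMap.proj_apply, smul_eq_mul]
        by_cases h0 : k = 0
        · rw [h0, hw0', hy0]; ring
        by_cases h1 : k = i
        · rw [h1, hwi', hz0, hyz]; ring
        rw [hwi k h0 h1]
        simp [Pi.single_eq_of_ne (Ne.symm h0), Pi.single_eq_of_ne (Ne.symm h1)]
      rw [this, smul_zero]
    rw [htop] at hker
    have h1 : e (Pi.single i 1) ∈ LinearMap.ker ℓ := hker Submodule.mem_top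
    rw [LinearMap.mem_ker] at h1
    simp [ℓ, ℓ₀, Pi.single_eq_of_ne (Ne.symm hi)] at h1

theorem isRNC_zero (X : Set (PS K (0 + 1))) (hX : X.Nonempty) : IsRNC K X := by
  have hk0 : ∀ k : Fin (0 + 1), k = 0 := fun k => Fin.ext (by have := k.isLt; simp only [Fin.val_zero]; omega)
  have hall : ∀ p q : PS K (0 + 1), p = q := by
    intro p q
    induction p using Projectivization.ind with
    | h v hv =>
    induction q using Projectivization.ind with
    | h w hw =>
    rw [Projectivization.mk_eq_mk_iff']
    have hw0 : w 0 ≠ 0 := by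
      intro h0
      apply hw
      funext k
      rw [hk0 k, h0]; rfl
    refine ⟨v 0 / w 0, ?_⟩
    funext k
    rw [hk0 k]
    simp [hw0]
  obtain ⟨p₀, hp₀⟩ := hX
  refine ⟨LinearEquiv.refl K _, ?_⟩
  ext p
  refine ⟨fun _ => ⟨fun _ => 1, ?_, hall _ _⟩, fun _ => by rw [hall p p₀]; exact hp₀⟩
  intro h0
  have := congrFun h0 0
  simp at this

end bridge

/-- If every finite subset of `X` with at most `r+1` points is linearly
independent (i.e. `ρ'(X) = r+1`), then `X` is a rational normal curve. -/
theorem statement0 [IsAlgClosed K] [CharZero K] (r : ℕ) (X : Set (PS K (r + 1)))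
    (hX : IsVariety K X)
    (h : ∀ S : Finset (PS K (r + 1)), ↑S ⊆ X → S.card ≤ r + 1 → LinIndepSet K S) :
    IsRNC K X := by
  rcases r with _ | r
  · exact isRNC_zero X hX.1.1
  obtain ⟨e, he⟩ := exists_frame X hX.2
  obtain ⟨c, d, hcd, hY⟩ := (goodCone_of X hX h e he).exists_phi
  obtain ⟨M, hM⟩ := phi_equiv c d hcd
  refine ⟨M.trans e, ?_⟩
  have hg : ∀ v : Fin 2 → K, (M.trans e) (fun i => v 0 ^ (i : ℕ) * v 1 ^ (r + 1 + 1 - 1 - (i : ℕ)))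
      = e (phi c d v) := by
    intro v
    rw [LinearEquiv.trans_apply, hM]
  ext p
  constructor
  · intro hp
    induction p using Projectivization.ind with
    | h v hv =>
    obtain ⟨u, t, ht, hne, hut⟩ := (hY (e.symm v)).mp ⟨by simpa using hv, by simpa using hp⟩
    refine ⟨u, by rw [hg]; simpa using hne, ?_⟩
    rw [Projectivization.mk_eq_mk_iff']
    refine ⟨t, ?_⟩
    rw [hg, ← map_smul, ← hut, LinearEquiv.apply_symm_apply]
  · rintro ⟨v, hv, rfl⟩
    have hv' := hv
    rw [hg] at hv'
    obtain ⟨h1, h2⟩ := (hY (phi c d v)).mpr ⟨v, 1, one_ne_zero, by simpa using hv', by simp⟩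
    have : ∀ (x : Fin (r + 1 + 1) → K) (hx : x ≠ 0), x = e (phi c d v) →
        Projectivization.mk K x hx ∈ X := by
      rintro x hx rfl
      exact h2
    exact this _ hv (hg v)

end Dep
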